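/- Generalized cross matrix structure of reflection-equation solutions: suppose N ≥ 3 and q is not a root of unity. Let K be an N×N matrix whose entries k_{ij} are rational functions of one complex variable, with K invertible over the field of rational functions, and suppose K satisfies the untwisted reflection equation (RE) for all u, v in a cofinite subset of ℂ^× (equivalently, as an identity of rational functions). Then there exists an involution σ of {1,…,N} such that k_{ij} = 0 whenever i ≠ j and j ≠ σ(i); that is, K(u) is a generalized cross matrix: all of its nonzero entries lie on the diagonal or at positions (i, σ(i)). -/

import Mathlib

/-!
The nonzero off-diagonal positions of `K` form a directed graph on the indices, and the reflection
equation forces this graph to be part of the graph of an involution.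

Up to the scalar `f_q(u)`, the matrix `R(u)` has `q - q⁻¹ u` or `1 - u` on the diagonal and
`(q - q⁻¹)` or `(q - q⁻¹) u` at the flip positions, so that each entry of the reflection equation
at `(u, v)` is a short identity between products of entries of `K(u)` and `K(v)`
(`RE_entry`). Write `x = u / v` and `y = u v`. Three kinds of entries suffice.

* Row entries `((i,i),(k,l))` with `i, k, l` distinct: if `F = K_{ik}` and `G = K_{il}`, then
  `(q - 1)(1 + x/q) F(u) G(v) = (q - q⁻¹) x^ε F(v) G(u)` with `ε ∈ {0, 1}`. Multiplying by the
  same identity with `u` and `v` exchanged gives `F G = 0` or `(x - 1)² = 0`, so a row has at most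
  one nonzero off-diagonal entry.
* Column entries `((i,j),(k,k))` give the same conclusion for columns.
* Entries `((a,b),(b,c))` with `a, b, c` distinct: if `K_{ab}` and `K_{bc}` are nonzero, then
  uniqueness in the row of `a` kills all other terms and leaves
  `(q - 1)(1 + y/q) K_{ab}(u) K_{bc}(v) = 0`, which is impossible for generic `u, v`.

Hence the symmetrized graph is the graph of a partial involution, which is extended by the identity.
-/


open Matrix
open scoped Kronecker

noncomputable section

/-- 1-based matrix unit `E_{a b}` in the `N × N` complex matrices. -/
def Em (N : ℕ) (a b : ℕ) : Matrix (Fin N) (Fin N) ℂ :=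
  Matrix.of fun i j => if (i : ℕ) + 1 = a ∧ (j : ℕ) + 1 = b then 1 else 0

/-- The flip (permutation) operator `P = Σ_{i,j} E_{ij} ⊗ E_{ji}`. -/
def Pmat (N : ℕ) : Matrix (Fin N × Fin N) (Fin N × Fin N) ℂ :=
  ∑ i ∈ Finset.Icc 1 N, ∑ j ∈ Finset.Icc 1 N, Em N i j ⊗ₖ Em N j i

/-- The constant R-matrix `R_q`. -/
def Rconst (N : ℕ) (q : ℂ) : Matrix (Fin N × Fin N) (Fin N × Fin N) ℂ :=
  (∑ i ∈ Finset.Icc 1 N, ∑ j ∈ Finset.Icc 1 N,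
      (if i = j then q else 1) • (Em N i i ⊗ₖ Em N j j))
    + ∑ i ∈ Finset.Icc 1 N, ∑ j ∈ Finset.Icc 1 N,
        (if i < j then q - q⁻¹ else 0) • (Em N i j ⊗ₖ Em N j i)

/-- `f_q(u) = 1/(q - q⁻¹ u)`. -/
def fBJ (q u : ℂ) : ℂ := (q - q⁻¹ * u)⁻¹

/-- The Bazhanov–Jimbo R-matrix `R(u) = f_q(u) R_q + f_{q⁻¹}(u⁻¹) P R_{q⁻¹} P`. -/
def RBJ (N : ℕ) (q u : ℂ) : Matrix (Fin N × Fin N) (Fin N × Fin N) ℂ :=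
  fBJ q u • Rconst N q + fBJ q⁻¹ u⁻¹ • (Pmat N * Rconst N q⁻¹ * Pmat N)

/-- `X1 = X ⊗ I`. -/
def M1 (N : ℕ) (X : Matrix (Fin N) (Fin N) ℂ) : Matrix (Fin N × Fin N) (Fin N × Fin N) ℂ :=
  X ⊗ₖ (1 : Matrix (Fin N) (Fin N) ℂ)

/-- `X2 = I ⊗ X`. -/
def M2 (N : ℕ) (X : Matrix (Fin N) (Fin N) ℂ) : Matrix (Fin N × Fin N) (Fin N × Fin N) ℂ :=
  (1 : Matrix (Fin N) (Fin N) ℂ) ⊗ₖ X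

/-- `R21(u) = P R(u) P`. -/
def R21 (N : ℕ) (q u : ℂ) : Matrix (Fin N × Fin N) (Fin N × Fin N) ℂ :=
  Pmat N * RBJ N q u * Pmat N

/-- Transposition in the first tensor factor. -/
def t1 (N : ℕ) (X : Matrix (Fin N × Fin N) (Fin N × Fin N) ℂ) :
    Matrix (Fin N × Fin N) (Fin N × Fin N) ℂ :=
  Matrix.of fun p r => X (r.1, p.2) (p.1, r.2)

/-- The charge conjugation matrix `C = Σ_i (-q)^i E_{ī i}` where `ī = N+1-i`. -/
def Cmat (N : ℕ) (q : ℂ) : Matrix (Fin N) (Fin N) ℂ :=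
  ∑ i ∈ Finset.Icc 1 N, (-q) ^ i • Em N (N + 1 - i) i

/-- The C-conjugated R-matrix `R^∨(u) = C2⁻¹ R^{t1}(q̃² u⁻¹) C2` with `q̃ = s^N`. -/
def Rvee (N : ℕ) (q s u : ℂ) : Matrix (Fin N × Fin N) (Fin N × Fin N) ℂ :=
  (M2 N (Cmat N q))⁻¹ * t1 N (RBJ N q ((s ^ N) ^ 2 * u⁻¹)) * M2 N (Cmat N q)

/-- `R^∨21(u) = P R^∨(u) P`. -/
def Rvee21 (N : ℕ) (q s u : ℂ) : Matrix (Fin N × Fin N) (Fin N × Fin N) ℂ :=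
  Pmat N * Rvee N q s u * Pmat N

/-- The untwisted reflection equation at spectral parameters `(u, v)`. -/
def REeq (N : ℕ) (q : ℂ) (K : ℂ → Matrix (Fin N) (Fin N) ℂ) (u v : ℂ) : Prop :=
  R21 N q (u / v) * M1 N (K u) * RBJ N q (u * v) * M2 N (K v)
    = M2 N (K v) * R21 N q (u * v) * M1 N (K u) * RBJ N q (u / v)

/-- `K` satisfies the untwisted reflection equation (RE) for all `u, v`
for which all factors are defined. -/
def IsRESol (N : ℕ) (q : ℂ) (K : ℂ → Matrix (Fin N) (Fin N) ℂ) : Prop :=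
  ∀ u v : ℂ, u ≠ 0 → v ≠ 0 → u / v ≠ q ^ 2 → u / v ≠ q⁻¹ ^ 2 →
    u * v ≠ q ^ 2 → u * v ≠ q⁻¹ ^ 2 → REeq N q K u v

/-- The cross-conjugated twisted reflection equation at `(u, v)`. -/
def CtREeq (N : ℕ) (q s : ℂ) (K : ℂ → Matrix (Fin N) (Fin N) ℂ) (u v : ℂ) : Prop :=
  R21 N q (u / v) * M1 N (K u) * Rvee N q s (u * v) * M2 N (K v)
    = M2 N (K v) * Rvee21 N q s (u * v) * M1 N (K u) * RBJ N q (u / v)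

/-- `K` satisfies the cross-conjugated twisted reflection equation (CtRE) for all
`u, v` for which all factors are defined. -/
def IsCtRESol (N : ℕ) (q s : ℂ) (K : ℂ → Matrix (Fin N) (Fin N) ℂ) : Prop :=
  ∀ u v : ℂ, u ≠ 0 → v ≠ 0 → u / v ≠ q ^ 2 → u / v ≠ q⁻¹ ^ 2 →
    (s ^ N) ^ 2 * (u * v)⁻¹ ≠ q ^ 2 → (s ^ N) ^ 2 * (u * v)⁻¹ ≠ q⁻¹ ^ 2 →
    CtREeq N q s K u v

/-- Transposition across the antidiagonal: `(M^w)_{ij} = M_{N+1-j, N+1-i}`. -/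
def wT (N : ℕ) (M : Matrix (Fin N) (Fin N) ℂ) : Matrix (Fin N) (Fin N) ℂ :=
  Matrix.of fun i j => M (Fin.rev j) (Fin.rev i)

/-- Entrywise evaluation of a matrix of rational functions at a point. -/
def evalMat (N : ℕ) (K : Matrix (Fin N) (Fin N) (RatFunc ℂ)) (u : ℂ) :
    Matrix (Fin N) (Fin N) ℂ :=
  Matrix.of fun i j => (K i j).eval (RingHom.id ℂ) u

/-! ### Entries of the R-matrix -/

/-- The matrix `∑ d_{ij} E_{ii} ⊗ E_{jj} + ∑ s_{ij} E_{ij} ⊗ E_{ji}`. -/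
def iceMat (N : ℕ) (d s : Fin N → Fin N → ℂ) : Matrix (Fin N × Fin N) (Fin N × Fin N) ℂ :=
  Matrix.of fun p r =>
    (if p = r then d p.1 p.2 else 0) + (if p = r.swap then s p.1 p.2 else 0)

/-- Diagonal weights of `R(u)`, with the scalar `f_q(u)` removed. -/
def dW (N : ℕ) (q u : ℂ) (i j : Fin N) : ℂ := if i = j then q - q⁻¹ * u else 1 - u

/-- Flip weights of `R(u)`, with the scalar `f_q(u)` removed. -/
def sW (N : ℕ) (q u : ℂ) (i j : Fin N) : ℂ :=
  if i = j then 0 else if i < j then q - q⁻¹ else (q - q⁻¹) * u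

lemma Em_apply (N a b : ℕ) (i j : Fin N) :
    Em N a b i j = if (i : ℕ) + 1 = a ∧ (j : ℕ) + 1 = b then 1 else 0 := rfl

lemma sum_Icc_pick (N : ℕ) (g : ℕ → ℕ → ℂ) (i j : Fin N) :
    ∑ a ∈ Finset.Icc 1 N, ∑ b ∈ Finset.Icc 1 N,
      (if (i : ℕ) + 1 = a ∧ (j : ℕ) + 1 = b then g a b else 0) = g (i + 1) (j + 1) := by
  rw [Finset.sum_eq_single ((i : ℕ) + 1)]
  · rw [Finset.sum_eq_single ((j : ℕ) + 1)]
    · simp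
    · intro b _ hb
      rw [if_neg]
      rintro ⟨_, h⟩
      exact hb h.symm
    · intro h
      exact absurd (Finset.mem_Icc.2 ⟨by omega, by omega⟩) h
  · intro b _ hb
    refine Finset.sum_eq_zero fun c _ => ?_
    rw [if_neg]
    rintro ⟨h, _⟩
    exact hb h.symm
  · intro h
    exact absurd (Finset.mem_Icc.2 ⟨by omega, by omega⟩) h

lemma sum_diag_apply (N : ℕ) (g : ℕ → ℕ → ℂ) (i j k l : Fin N) :
    (∑ a ∈ Finset.Icc 1 N, ∑ b ∈ Finset.Icc 1 N, g a b • (Em N a a ⊗ₖ Em N b b)) (i, j) (k, l)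
      = if i = k ∧ j = l then g (i + 1) (j + 1) else 0 := by
  simp only [Matrix.sum_apply, Matrix.smul_apply, Matrix.kroneckerMap_apply, Em_apply, smul_eq_mul]
  split_ifs with h
  · obtain ⟨rfl, rfl⟩ := h
    rw [← sum_Icc_pick N g i j]
    refine Finset.sum_congr rfl fun a _ => Finset.sum_congr rfl fun b _ => ?_
    by_cases h1 : (i : ℕ) + 1 = a <;> by_cases h2 : (j : ℕ) + 1 = b <;> simp [h1, h2]
  · refine Finset.sum_eq_zero fun a _ => Finset.sum_eq_zero fun b _ => ?_
    simp only [Fin.ext_iff] at h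
    split_ifs <;> first | (exfalso; omega) | simp

lemma sum_flip_apply (N : ℕ) (g : ℕ → ℕ → ℂ) (i j k l : Fin N) :
    (∑ a ∈ Finset.Icc 1 N, ∑ b ∈ Finset.Icc 1 N, g a b • (Em N a b ⊗ₖ Em N b a)) (i, j) (k, l)
      = if i = l ∧ j = k then g (i + 1) (j + 1) else 0 := by
  simp only [Matrix.sum_apply, Matrix.smul_apply, Matrix.kroneckerMap_apply, Em_apply, smul_eq_mul]
  split_ifs with h
  · obtain ⟨rfl, rfl⟩ := h
    rw [← sum_Icc_pick N g i j]
    refine Finset.sum_congr rfl fun a _ => Finset.sum_congr rfl fun b _ => ?_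
    by_cases h1 : (i : ℕ) + 1 = a <;> by_cases h2 : (j : ℕ) + 1 = b <;> simp [h1, h2]
  · refine Finset.sum_eq_zero fun a _ => Finset.sum_eq_zero fun b _ => ?_
    simp only [Fin.ext_iff] at h
    split_ifs <;> first | (exfalso; omega) | simp

lemma Pmat_apply (N : ℕ) (p r : Fin N × Fin N) : Pmat N p r = if p = r.swap then 1 else 0 := by
  have h := sum_flip_apply N (fun _ _ => 1) p.1 p.2 r.1 r.2
  simp only [one_smul] at h
  rw [Pmat, h]
  simp [Prod.ext_iff]

lemma Pmat_conj (N : ℕ) (X : Matrix (Fin N × Fin N) (Fin N × Fin N) ℂ) (p r : Fin N × Fin N) :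
    (Pmat N * X * Pmat N) p r = X p.swap r.swap := by
  have hsw : ∀ a b : Fin N × Fin N, a = b.swap ↔ b = a.swap := by
    intro a b
    constructor <;> (rintro rfl; simp)
  rw [Matrix.mul_apply]
  simp only [Matrix.mul_apply, Pmat_apply, mul_ite, mul_one, mul_zero, Finset.sum_ite_eq',
    Finset.mem_univ, if_true, ite_mul, one_mul, zero_mul]
  simp [hsw p]

lemma Rconst_apply (N : ℕ) (q : ℂ) (i j k l : Fin N) :
    Rconst N q (i, j) (k, l) = (if i = k ∧ j = l then (if i = j then q else 1) else 0)
      + (if i = l ∧ j = k then (if i < j then q - q⁻¹ else 0) else 0) := by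
  rw [Rconst, Matrix.add_apply, sum_diag_apply N (fun i j => if i = j then q else 1),
    sum_flip_apply N (fun i j => if i < j then q - q⁻¹ else 0)]
  simp [Fin.ext_iff]

lemma RBJ_eq (N : ℕ) (q u : ℂ) (hq : q ≠ 0) (hu : u ≠ 0) :
    RBJ N q u = fBJ q u • iceMat N (dW N q u) (sW N q u) := by
  have hf : fBJ q⁻¹ u⁻¹ = -u * fBJ q u := by
    have : q⁻¹ - q⁻¹⁻¹ * u⁻¹ = (-u)⁻¹ * (q - q⁻¹ * u) := by
      field_simp
      ring
    rw [fBJ, fBJ, this, mul_inv, inv_inv]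
  ext ⟨i, j⟩ ⟨k, l⟩
  simp only [RBJ, hf, Matrix.add_apply, Matrix.smul_apply, Pmat_conj, Prod.swap, Rconst_apply,
    iceMat, dW, sW, Matrix.of_apply, smul_eq_mul, Prod.mk.injEq, inv_inv]
  rcases lt_trichotomy i j with h | h | h
  · by_cases h1 : i = k ∧ j = l
    · obtain ⟨rfl, rfl⟩ := h1
      simp [h.ne, h.ne']
      ring
    · by_cases h2 : i = l ∧ j = k
      · obtain ⟨rfl, rfl⟩ := h2
        simp [h.ne, h.ne', h, not_lt_of_gt h]
      · have h1' : ¬ (j = l ∧ i = k) := fun h => h1 ⟨h.2, h.1⟩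
        have h2' : ¬ (j = k ∧ i = l) := fun h => h2 ⟨h.2, h.1⟩
        simp [h1, h2, h1', h2']
  · subst h
    by_cases h1 : i = k ∧ i = l
    · obtain ⟨rfl, rfl⟩ := h1
      simp
      ring
    · have h1' : ¬ (i = l ∧ i = k) := fun h => h1 ⟨h.2, h.1⟩
      simp [h1, h1']
  · by_cases h1 : i = k ∧ j = l
    · obtain ⟨rfl, rfl⟩ := h1
      simp [h.ne, h.ne']
      ring
    · by_cases h2 : i = l ∧ j = k
      · obtain ⟨rfl, rfl⟩ := h2
        simp [h.ne, h.ne', h, not_lt_of_gt h]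
        ring
      · have h1' : ¬ (j = l ∧ i = k) := fun h => h1 ⟨h.2, h.1⟩
        have h2' : ¬ (j = k ∧ i = l) := fun h => h2 ⟨h.2, h.1⟩
        simp [h1, h2, h1', h2']

lemma R21_eq (N : ℕ) (q u : ℂ) (hq : q ≠ 0) (hu : u ≠ 0) :
    R21 N q u = fBJ q u • iceMat N (dW N q u) (fun i j => sW N q u j i) := by
  ext ⟨i, j⟩ ⟨k, l⟩
  rw [R21, Pmat_conj, RBJ_eq N q u hq hu]
  simp only [Matrix.smul_apply, iceMat, Matrix.of_apply, Prod.swap, Prod.mk.injEq, smul_eq_mul, dW]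
  simp only [and_comm, eq_comm]

/-! ### Entries of the reflection equation -/

lemma iceMat_mul_apply (N : ℕ) (d s : Fin N → Fin N → ℂ)
    (X : Matrix (Fin N × Fin N) (Fin N × Fin N) ℂ) (i j : Fin N) (r : Fin N × Fin N) :
    (iceMat N d s * X) (i, j) r = d i j * X (i, j) r + s i j * X (j, i) r := by
  have hsw : ∀ b : Fin N × Fin N, (i, j) = b.swap ↔ (j, i) = b := by
    rintro ⟨a, b⟩
    simp [and_comm]
  simp [Matrix.mul_apply, iceMat, add_mul, Finset.sum_add_distrib, hsw]

lemma mul_iceMat_apply (N : ℕ) (d s : Fin N → Fin N → ℂ)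
    (X : Matrix (Fin N × Fin N) (Fin N × Fin N) ℂ) (p : Fin N × Fin N) (k l : Fin N) :
    (X * iceMat N d s) p (k, l) = X p (k, l) * d k l + X p (l, k) * s l k := by
  simp [Matrix.mul_apply, iceMat, mul_add, Finset.sum_add_distrib]

lemma M1_ice_M2_apply (N : ℕ) (d s : Fin N → Fin N → ℂ) (A B : Matrix (Fin N) (Fin N) ℂ)
    (i j k l : Fin N) :
    (M1 N A * (iceMat N d s * M2 N B)) (i, j) (k, l)
      = A i k * d k j * B j l + if j = k then ∑ m, s m j * A i m * B m l else 0 := by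
  rw [Matrix.mul_apply, Fintype.sum_prod_type]
  simp only [iceMat_mul_apply, M1, M2, Matrix.kroneckerMap_apply, Matrix.one_apply, mul_ite,
    mul_one, mul_zero, ite_mul, one_mul, zero_mul, Finset.mem_univ, if_true,
    mul_add, Finset.sum_add_distrib, Finset.sum_ite_eq']
  congr 1
  · rw [Finset.sum_comm]
    simp [mul_assoc]
  · split_ifs with h
    · subst h
      exact Finset.sum_congr rfl fun m _ => by ring
    · simp

lemma M2_ice_M1_apply (N : ℕ) (d s : Fin N → Fin N → ℂ) (A B : Matrix (Fin N) (Fin N) ℂ)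
    (i j k l : Fin N) :
    (M2 N B * (iceMat N d s * M1 N A)) (i, j) (k, l)
      = B j l * d i l * A i k + if l = i then ∑ n, s i n * B j n * A n k else 0 := by
  rw [Matrix.mul_apply, Fintype.sum_prod_type]
  rw [Finset.sum_comm]
  simp only [iceMat_mul_apply, M1, M2, Matrix.kroneckerMap_apply, Matrix.one_apply, mul_ite,
    mul_one, mul_zero, ite_mul, one_mul, zero_mul, Finset.mem_univ, if_true,
    mul_add, Finset.sum_add_distrib, Finset.sum_ite_eq']
  congr 1
  · rw [Finset.sum_comm]
    simp [mul_assoc]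
  · simp only [eq_comm (a := i)]
    split_ifs with h
    · subst h
      exact Finset.sum_congr rfl fun m _ => by ring
    · simp

lemma fBJ_ne_zero (q x : ℂ) (hq : q ≠ 0) (hx : x ≠ q ^ 2) : fBJ q x ≠ 0 := by
  refine inv_ne_zero fun h => hx ?_
  field_simp at h
  linear_combination -h

/-- The entry `((i,j),(k,l))` of the reflection equation, with the scalars `f_q` cancelled. -/
lemma RE_entry (N : ℕ) (q : ℂ) (hq : q ≠ 0) (K : ℂ → Matrix (Fin N) (Fin N) ℂ) (u v : ℂ)
    (hu : u ≠ 0) (hv : v ≠ 0) (hx : u / v ≠ q ^ 2) (hy : u * v ≠ q ^ 2) (h : REeq N q K u v)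
    (i j k l : Fin N) :
    dW N q (u / v) i j * (K u i k * dW N q (u * v) k j * K v j l
        + if j = k then ∑ m, sW N q (u * v) m j * K u i m * K v m l else 0)
      + sW N q (u / v) j i * (K u j k * dW N q (u * v) k i * K v i l
        + if i = k then ∑ m, sW N q (u * v) m i * K u j m * K v m l else 0)
    = (K v j l * dW N q (u * v) i l * K u i k
        + if l = i then ∑ n, sW N q (u * v) n i * K v j n * K u n k else 0) * dW N q (u / v) k l
      + (K v j k * dW N q (u * v) i k * K u i l
        + if k = i then ∑ n, sW N q (u * v) n i * K v j n * K u n l else 0)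
          * sW N q (u / v) l k := by
  have hxne : u / v ≠ 0 := div_ne_zero hu hv
  have hyne : u * v ≠ 0 := mul_ne_zero hu hv
  have hfx := fBJ_ne_zero q _ hq hx
  have hfy := fBJ_ne_zero q _ hq hy
  rw [REeq, R21_eq N q _ hq hxne, R21_eq N q _ hq hyne, RBJ_eq N q _ hq hxne,
    RBJ_eq N q _ hq hyne] at h
  simp only [Matrix.smul_mul, Matrix.mul_smul, smul_smul] at h
  rw [mul_comm (fBJ q (u * v)) (fBJ q (u / v))] at h
  have h' := smul_right_injective _ (mul_ne_zero hfx hfy) h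
  have e := congrFun (congrFun h' (i, j)) (k, l)
  rw [mul_iceMat_apply, Matrix.mul_assoc, Matrix.mul_assoc, iceMat_mul_apply, Matrix.mul_assoc,
    M1_ice_M2_apply, M1_ice_M2_apply, M2_ice_M1_apply, M2_ice_M1_apply] at e
  exact e

/-! ### Consequences for the support of `K` -/

/-- The zeros and poles of a nonzero rational function are finite in number (`eval` is `0` at a
pole). -/
lemma finite_eval_eq_zero (F : RatFunc ℂ) (hF : F ≠ 0) :
    {w : ℂ | F.eval (RingHom.id ℂ) w = 0}.Finite := by
  have h1 := F.num.rootSet_finite ℂ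
  have h2 := F.denom.rootSet_finite ℂ
  refine (h1.union h2).subset fun w hw => ?_
  have hn : F.num ≠ 0 := RatFunc.num_ne_zero hF
  have hd : F.denom ≠ 0 := RatFunc.denom_ne_zero F
  simp only [Set.mem_ofPred_eq, RatFunc.eval, div_eq_zero_iff] at hw
  rcases hw with hw | hw
  · left
    rw [Polynomial.mem_rootSet]
    exact ⟨hn, by simpa [Polynomial.aeval_def] using hw⟩
  · right
    rw [Polynomial.mem_rootSet]
    exact ⟨hd, by simpa [Polynomial.aeval_def] using hw⟩

/-- Generic spectral parameters at which two given nonzero rational functions do not vanish. -/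
lemma exists_generic (q : ℂ) (S : Set ℂ) (hS : Sᶜ.Finite) (F G : RatFunc ℂ) (hF : F ≠ 0)
    (hG : G ≠ 0) :
    ∃ u v : ℂ, u ∈ S ∧ v ∈ S ∧ u ≠ 0 ∧ v ≠ 0 ∧ u ≠ v ∧ u / v ≠ q ^ 2 ∧ u / v ≠ q⁻¹ ^ 2 ∧
      v / u ≠ q ^ 2 ∧ v / u ≠ q⁻¹ ^ 2 ∧ u * v ≠ q ^ 2 ∧ u * v ≠ q⁻¹ ^ 2 ∧ u * v ≠ 1 ∧ u * v ≠ -q ∧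
      F.eval (RingHom.id ℂ) u ≠ 0 ∧ F.eval (RingHom.id ℂ) v ≠ 0 ∧
      G.eval (RingHom.id ℂ) u ≠ 0 ∧ G.eval (RingHom.id ℂ) v ≠ 0 := by
  have hB : (Sᶜ ∪ {w : ℂ | F.eval (RingHom.id ℂ) w = 0} ∪
      {w : ℂ | G.eval (RingHom.id ℂ) w = 0} ∪ {0}).Finite :=
    ((hS.union (finite_eval_eq_zero F hF)).union (finite_eval_eq_zero G hG)).union
      (Set.finite_singleton 0)
  obtain ⟨v, hv⟩ := hB.infinite_compl.nonempty
  simp only [Set.mem_compl_iff, Set.mem_union, Set.mem_ofPred_eq, Set.mem_singleton_iff, not_or,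
    not_not] at hv
  obtain ⟨⟨⟨hvS, hvF⟩, hvG⟩, hv0⟩ := hv
  have hC : ({v, q ^ 2 * v, q⁻¹ ^ 2 * v, v / q ^ 2, v / q⁻¹ ^ 2, q ^ 2 / v, q⁻¹ ^ 2 / v,
      1 / v, -q / v} : Set ℂ).Finite := by simp
  obtain ⟨u, hu⟩ := (hB.union hC).infinite_compl.nonempty
  simp only [Set.mem_compl_iff, Set.mem_union, Set.mem_ofPred_eq, Set.mem_singleton_iff, not_or,
    not_not, Set.mem_insert_iff] at hu
  obtain ⟨⟨⟨⟨huS, huF⟩, huG⟩, hu0⟩, c1, c2, c3, c4, c5, c6, c7, c8, c9⟩ := hu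
  have key : ∀ t, v / u = t → u = v / t := by
    rintro t rfl
    field_simp
  refine ⟨u, v, huS, hvS, hu0, hv0, c1, fun h => c2 ((div_eq_iff hv0).1 h),
    fun h => c3 ((div_eq_iff hv0).1 h), fun h => c4 (key _ h), fun h => c5 (key _ h),
    fun h => c6 ((eq_div_iff hv0).2 h), fun h => c7 ((eq_div_iff hv0).2 h),
    fun h => c8 ((eq_div_iff hv0).2 h), fun h => c9 ((eq_div_iff hv0).2 h), huF, hvF, huG, hvG⟩

/-- The scalar contradiction behind uniqueness in rows and columns: `h1` and `h2` are the same
entry of the reflection equation at `(u, v)` and at `(v, u)`. -/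
lemma scalar_contra (N : ℕ) (q u v : ℂ) (hq : q ≠ 0) (hq2 : q ^ 2 ≠ 1) (hu : u ≠ 0) (hv : v ≠ 0)
    (huv : u ≠ v) (k l : Fin N) (hkl : k ≠ l) (Fu Fv Gu Gv : ℂ) (hFu : Fu ≠ 0) (hFv : Fv ≠ 0)
    (hGu : Gu ≠ 0) (hGv : Gv ≠ 0)
    (h1 : (q - q⁻¹ * (u / v)) * (Fu * Gv) = (1 - u / v) * (Fu * Gv)
      + sW N q (u / v) l k * (Fv * Gu))
    (h2 : (q - q⁻¹ * (v / u)) * (Fv * Gu) = (1 - v / u) * (Fv * Gu)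
      + sW N q (v / u) l k * (Fu * Gv)) : False := by
  have hs : sW N q (u / v) l k * sW N q (v / u) l k = (q - q⁻¹) ^ 2 := by
    rw [sW, sW, if_neg hkl.symm, if_neg hkl.symm]
    split_ifs
    · ring
    · field_simp
  have hne : Fu * Gv * (Fv * Gu) ≠ 0 :=
    mul_ne_zero (mul_ne_zero hFu hGv) (mul_ne_zero hFv hGu)
  have hp : ((q - q⁻¹ * (u / v) - (1 - u / v)) * (q - q⁻¹ * (v / u) - (1 - v / u))
      - (q - q⁻¹) ^ 2) * (Fu * Gv * (Fv * Gu)) = 0 := by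
    rw [← hs]
    linear_combination (q - q⁻¹ * (v / u) - (1 - v / u)) * (Fv * Gu) * h1
      + sW N q (u / v) l k * (Fv * Gu) * h2
  have h3 := (mul_eq_zero.1 hp).resolve_right hne
  have h4 : (q - 1) ^ 2 * q * (u - v) ^ 2 = 0 := by
    field_simp at h3
    linear_combination h3
  have hq1 : q - 1 ≠ 0 := fun h => hq2 (by rw [sub_eq_zero.1 h, one_pow])
  exact mul_ne_zero (mul_ne_zero (pow_ne_zero 2 hq1) hq) (pow_ne_zero 2 (sub_ne_zero.2 huv)) h4

section Support

variable {N : ℕ} {q : ℂ} {K : Matrix (Fin N) (Fin N) (RatFunc ℂ)} {S : Set ℂ}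

lemma row_unique (hq : q ≠ 0) (hq2 : q ^ 2 ≠ 1) (hS : Sᶜ.Finite)
    (hRE : ∀ u ∈ S, ∀ v ∈ S, u ≠ 0 → v ≠ 0 → u / v ≠ q ^ 2 → u / v ≠ q⁻¹ ^ 2 →
      u * v ≠ q ^ 2 → u * v ≠ q⁻¹ ^ 2 → REeq N q (fun w => evalMat N K w) u v)
    {i k l : Fin N} (hik : i ≠ k) (hil : i ≠ l) (hk : K i k ≠ 0) (hl : K i l ≠ 0) : k = l := by
  by_contra hkl
  obtain ⟨u, v, huS, hvS, hu, hv, huv, c1, c2, c3, c4, c5, c6, c7, -, f1, f2, g1, g2⟩ :=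
    exists_generic q S hS _ _ hk hl
  have e1 := RE_entry N q hq _ u v hu hv c1 c5 (hRE u huS v hvS hu hv c1 c2 c5 c6) i i k l
  have e2 := RE_entry N q hq _ v u hv hu c3 (by rwa [mul_comm])
    (hRE v hvS u huS hv hu c3 c4 (by rwa [mul_comm]) (by rwa [mul_comm])) i i k l
  have hb : 1 - u * v ≠ 0 := sub_ne_zero.2 c7.symm
  simp only [hik, hik.symm, hil.symm, hil, hkl, dW, if_true, if_false, add_zero] at e1 e2
  rw [sW, if_pos rfl, zero_mul, add_zero] at e1 e2
  rw [mul_comm v u] at e2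
  refine scalar_contra N q u v hq hq2 hu hv huv k l hkl _ _ _ _ f1 f2 g1 g2
    (mul_left_cancel₀ hb ?_) (mul_left_cancel₀ hb ?_)
  · simp only [evalMat, Matrix.of_apply] at e1
    linear_combination e1
  · simp only [evalMat, Matrix.of_apply] at e2
    linear_combination e2

lemma col_unique (hq : q ≠ 0) (hq2 : q ^ 2 ≠ 1) (hS : Sᶜ.Finite)
    (hRE : ∀ u ∈ S, ∀ v ∈ S, u ≠ 0 → v ≠ 0 → u / v ≠ q ^ 2 → u / v ≠ q⁻¹ ^ 2 →
      u * v ≠ q ^ 2 → u * v ≠ q⁻¹ ^ 2 → REeq N q (fun w => evalMat N K w) u v)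
    {i j k : Fin N} (hik : i ≠ k) (hjk : j ≠ k) (hi : K i k ≠ 0) (hj : K j k ≠ 0) : i = j := by
  by_contra hij
  obtain ⟨u, v, huS, hvS, hu, hv, huv, c1, c2, c3, c4, c5, c6, c7, -, f1, f2, g1, g2⟩ :=
    exists_generic q S hS _ _ hi hj
  have e1 := RE_entry N q hq _ u v hu hv c1 c5 (hRE u huS v hvS hu hv c1 c2 c5 c6) i j k k
  have e2 := RE_entry N q hq _ v u hv hu c3 (by rwa [mul_comm])
    (hRE v hvS u huS hv hu c3 c4 (by rwa [mul_comm]) (by rwa [mul_comm])) i j k k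
  have hb : 1 - u * v ≠ 0 := sub_ne_zero.2 c7.symm
  simp only [hik, hik.symm, hjk.symm, hjk, hij, dW, if_true, if_false, add_zero] at e1 e2
  rw [sW.eq_1 N q _ k k, if_pos rfl, mul_zero, add_zero] at e1 e2
  rw [mul_comm v u] at e2
  refine scalar_contra N q u v hq hq2 hu hv huv i j hij _ _ _ _ f1 f2 g1 g2
    (mul_left_cancel₀ hb ?_) (mul_left_cancel₀ hb ?_)
  · simp only [evalMat, Matrix.of_apply] at e1
    linear_combination -e1
  · simp only [evalMat, Matrix.of_apply] at e2
    linear_combination -e2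

/-- The support of `K` contains no path `a → b → c` through three distinct indices. -/
lemma no_path (hq : q ≠ 0) (hq2 : q ^ 2 ≠ 1) (hS : Sᶜ.Finite)
    (hRE : ∀ u ∈ S, ∀ v ∈ S, u ≠ 0 → v ≠ 0 → u / v ≠ q ^ 2 → u / v ≠ q⁻¹ ^ 2 →
      u * v ≠ q ^ 2 → u * v ≠ q⁻¹ ^ 2 → REeq N q (fun w => evalMat N K w) u v)
    {a b c : Fin N} (hab : a ≠ b) (hbc : b ≠ c) (h1 : K a b ≠ 0) (h2 : K b c ≠ 0) : a = c := by
  by_contra hac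
  obtain ⟨u, v, huS, hvS, hu, hv, huv, c1, c2, c3, c4, c5, c6, -, c8, f1, f2, g1, g2⟩ :=
    exists_generic q S hS _ _ h1 h2
  have hrow : ∀ m, a ≠ m → m ≠ b → K a m = 0 := by
    intro m ham hmb
    by_contra h
    exact hmb (row_unique hq hq2 hS hRE ham hab h h1)
  have hz : ∀ w, evalMat N K w a c = 0 := fun w => by
    simp [evalMat, hrow c hac hbc.symm]
  have e := RE_entry N q hq _ u v hu hv c1 c5 (hRE u huS v hvS hu hv c1 c2 c5 c6) a b b c
  have hsum : ∑ m, sW N q (u * v) m b * evalMat N K u a m * evalMat N K v m c = 0 := by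
    refine Finset.sum_eq_zero fun m _ => ?_
    by_cases ha : a = m
    · rw [← ha, hz, mul_zero]
    · by_cases hb : m = b
      · simp [hb, sW]
      · simp [evalMat, hrow m ha hb]
  have hx : 1 - u / v ≠ 0 := by
    intro h
    exact huv ((div_eq_one_iff_eq hv).1 (sub_eq_zero.1 h).symm)
  simp only [hab, hab.symm, hbc, Ne.symm hac, hac, dW, if_true, if_false, add_zero, hsum, hz,
    mul_zero, zero_mul] at e
  have hFG : evalMat N K u a b * evalMat N K v b c ≠ 0 := mul_ne_zero f1 g2
  have e' : q - q⁻¹ * (u * v) - (1 - u * v) = 0 := by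
    refine (mul_eq_zero.1 ?_).resolve_right (mul_ne_zero hx hFG)
    linear_combination e
  have hq1 : q - 1 ≠ 0 := fun h => hq2 (by rw [sub_eq_zero.1 h, one_pow])
  field_simp at e'
  have e3 : (q - 1) * (u * v + q) = 0 := by linear_combination e'
  exact c8 (eq_neg_of_add_eq_zero_left ((mul_eq_zero.1 e3).resolve_left hq1))

end Support

/-- generalized cross matrix structure: any invertible rational
solution of the untwisted reflection equation (RE) (for `N ≥ 3` and `q` not a root
of unity) has all of its nonzero entries on the diagonal or at the positions
`(i, σ(i))` of an involution `σ`. -/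
theorem statement19 (N : ℕ) (hN : 3 ≤ N) (q : ℂ) (hq : q ≠ 0)
    (hroot : ∀ n : ℕ, 0 < n → q ^ n ≠ 1)
    (K : Matrix (Fin N) (Fin N) (RatFunc ℂ)) (hK : IsUnit K)
    (S : Set ℂ) (hS : Sᶜ.Finite)
    (hRE : ∀ u ∈ S, ∀ v ∈ S, u ≠ 0 → v ≠ 0 → u / v ≠ q ^ 2 → u / v ≠ q⁻¹ ^ 2 →
      u * v ≠ q ^ 2 → u * v ≠ q⁻¹ ^ 2 →
      REeq N q (fun w => evalMat N K w) u v) :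
    ∃ σ : Equiv.Perm (Fin N), σ * σ = 1 ∧
      ∀ i j : Fin N, i ≠ j → j ≠ σ i → K i j = 0 := by
  have hq2 : q ^ 2 ≠ 1 := hroot 2 (by norm_num)
  classical
  -- the symmetrized off-diagonal support of `K`
  let E : Fin N → Fin N → Prop := fun i j => i ≠ j ∧ (K i j ≠ 0 ∨ K j i ≠ 0)
  have hsymm : ∀ i j, E i j → E j i := fun i j h => ⟨h.1.symm, h.2.symm⟩
  have huniq : ∀ i j l, E i j → E i l → j = l := by
    rintro i j l ⟨hij, h | h⟩ ⟨hil, h' | h'⟩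
    · exact row_unique hq hq2 hS hRE hij hil h h'
    · exact (no_path hq hq2 hS hRE hil.symm hij h' h).symm
    · exact no_path hq hq2 hS hRE hij.symm hil h h'
    · exact col_unique hq hq2 hS hRE hij.symm hil.symm h h'
  let f : Fin N → Fin N := fun i => if h : ∃ j, E i j then h.choose else i
  have hf : ∀ i j, E i j → f i = j := by
    intro i j h
    have hex : ∃ j, E i j := ⟨j, h⟩
    simp only [f, dif_pos hex]
    exact huniq i _ _ hex.choose_spec h
  have hinv : Function.Involutive f := by
    intro i
    by_cases hex : ∃ j, E i j
    · obtain ⟨j, h⟩ := hex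
      rw [hf i j h, hf j i (hsymm i j h)]
    · have : f i = i := by simp only [f, dif_neg hex]
      rw [this, this]
  refine ⟨hinv.toPerm f, Equiv.ext fun i => hinv i, fun i j hij hj => ?_⟩
  by_contra h
  exact hj (hf i j ⟨hij, Or.inl h⟩).symm

end
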